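/- Let e : Stream' ℕ → Stream' ℕ be any function satisfying e xs = SCons (2 ^ head xs) ((tail xs) ⊗ (e xs)) for all streams xs, where ⊗ is the shuffle product (binomial convolution). Then there exists exactly one stream y : Stream' ℕ satisfying y = e (SCons 0 y); moreover this unique stream is the stream of factorials starting at 0: y.get n = n! for all n. -/

import Mathlib

open Stream'

/-- Shuffle product of streams (binomial convolution). -/
def sshuffle (xs ys : Stream' ℕ) : Stream' ℕ :=
  fun n => ∑ k ∈ Finset.range (n + 1), n.choose k * xs.get k * ys.get (n - k)

infixl:70 " ⊗ " => sshuffle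

/-!
An equation `y = cons a (F y)` with `F` causal has at most one solution, since entry `n + 1` of `y`
is determined by the entries up to `n`. The factorials `f` satisfy `f = cons 1 (f ⊗ f)`, because
each of the `n + 1` terms of the `n`-th binomial convolution is `n!`. A fixed point of
`y ↦ e (cons 0 y)` solves `y = cons 1 (y ⊗ y)`, hence equals `f`; conversely `f` and
`e (cons 0 f)` both solve the linear equation `z = cons 1 (f ⊗ z)`, hence agree.
-/

theorem get_sshuffle (xs ys : Stream' ℕ) (n : ℕ) :
    (xs ⊗ ys).get n = ∑ k ∈ Finset.range (n + 1), n.choose k * xs.get k * ys.get (n - k) :=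
  rfl

/-- A stream transformer is causal if entry `n` of its output depends only on the entries of its
input up to and including `n`. Causality is what makes equations `y = cons a (F y)` well guarded. -/
def IsCausal {α β : Type*} (F : Stream' α → Stream' β) : Prop :=
  ∀ ⦃y z : Stream' α⦄ ⦃n : ℕ⦄, (∀ k ≤ n, y.get k = z.get k) → (F y).get n = (F z).get n

section Causal

variable {α β : Type*}

theorem isCausal_id : IsCausal (fun y : Stream' α => y) :=
  fun _ _ n agree => agree n le_rfl

theorem isCausal_const (x : Stream' β) : IsCausal (fun _ : Stream' α => x) :=
  fun _ _ _ _ => rfl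

theorem IsCausal.sshuffle {F G : Stream' α → Stream' ℕ} (hF : IsCausal F) (hG : IsCausal G) :
    IsCausal (fun y => F y ⊗ G y) := by
  intro y z n agree
  simp only [get_sshuffle]
  refine Finset.sum_congr rfl fun k hk => ?_
  have hkn : k ≤ n := Finset.mem_range_succ_iff.mp hk
  rw [hF fun i hi => agree i (hi.trans hkn), hG fun i hi => agree i (hi.trans (n.sub_le k))]

theorem IsCausal.eq_of_eq_cons {F : Stream' α → Stream' α} (hF : IsCausal F) {a : α}
    {y z : Stream' α} (hy : y = cons a (F y)) (hz : z = cons a (F z)) : y = z := by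
  refine Stream'.ext fun n => ?_
  induction n using Nat.strong_induction_on with
  | _ n ih =>
    rw [hy, hz]
    cases n with
    | zero => rfl
    | succ n =>
      rw [get_succ_cons, get_succ_cons]
      exact hF fun k hk => ih k (Nat.lt_succ_of_le hk)

end Causal

/-- The stream `0!, 1!, 2!, …`. -/
def factorialStream : Stream' ℕ :=
  fun n => n.factorial

theorem get_factorialStream (n : ℕ) : factorialStream.get n = n.factorial :=
  rfl

theorem get_factorialStream_sshuffle_self (n : ℕ) :
    (factorialStream ⊗ factorialStream).get n = (n + 1).factorial :=
  calc (factorialStream ⊗ factorialStream).get n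
      = ∑ k ∈ Finset.range (n + 1), n.choose k * k.factorial * (n - k).factorial :=
        get_sshuffle _ _ n
    _ = ∑ _k ∈ Finset.range (n + 1), n.factorial :=
        Finset.sum_congr rfl fun _ hk =>
          Nat.choose_mul_factorial_mul_factorial (Finset.mem_range_succ_iff.mp hk)
    _ = (n + 1).factorial := by
        rw [Finset.sum_const, Finset.card_range, smul_eq_mul, Nat.factorial_succ]

theorem factorialStream_eq_cons :
    factorialStream = cons 1 (factorialStream ⊗ factorialStream) := by
  refine Stream'.ext fun n => ?_
  cases n with
  | zero => rfl
  | succ n => rw [get_succ_cons, get_factorialStream_sshuffle_self, get_factorialStream]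

theorem eq_iff_eq_factorialStream_of_eq_cons {y z : Stream' ℕ} (hz : z = cons 1 (y ⊗ z)) :
    y = z ↔ y = factorialStream := by
  constructor
  · rintro rfl
    exact (isCausal_id.sshuffle isCausal_id).eq_of_eq_cons hz factorialStream_eq_cons
  · rintro rfl
    exact ((isCausal_const factorialStream).sshuffle isCausal_id).eq_of_eq_cons
      factorialStream_eq_cons hz

theorem stmt_13 (e : Stream' ℕ → Stream' ℕ)
    (he : ∀ xs, e xs = Stream'.cons (2 ^ xs.head) (xs.tail ⊗ e xs)) :
    (∃! y : Stream' ℕ, y = e (Stream'.cons 0 y)) ∧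
    (∀ y : Stream' ℕ, y = e (Stream'.cons 0 y) →
      ∀ n, y.get n = Nat.factorial n) := by
  have fixed_iff (y : Stream' ℕ) : y = e (cons 0 y) ↔ y = factorialStream :=
    eq_iff_eq_factorialStream_of_eq_cons (he (cons 0 y))
  refine ⟨⟨factorialStream, (fixed_iff _).mpr rfl, fun y => (fixed_iff y).mp⟩, fun y hy n => ?_⟩
  rw [(fixed_iff y).mp hy, get_factorialStream]
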